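/- Degenerated relative null bundle implies harmonic Gauss map (Theorem 3.6 (iv)⟹(iii)): in the setting of a minimal Lorentzian surface x(s,t) = α(s) + β(t) in null coordinates, if η₁(s,t) = 0 for all (s,t) (i.e. the second fundamental form annihilates the null tangent direction α'(s), so the relative null space contains a degenerate line), then ∂²ν/∂s∂t ≡ 0, i.e. the Gauss map ν is harmonic: Δν = 0. -/

import Mathlib

noncomputable section

/-- The Minkowski bilinear form on `ℝ⁴ = Fin 4 → ℝ`:
`B(v,w) = -v₀w₀ + v₁w₁ + v₂w₂ + v₃w₃`. -/
def B4 (v w : Fin 4 → ℝ) : ℝ :=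
  -(v 0 * w 0) + v 1 * w 1 + v 2 * w 2 + v 3 * w 3

/-- The wedge product `v ∧ w`, modelled concretely as the antisymmetric array
`(i,j) ↦ vᵢwⱼ - vⱼwᵢ` (a faithful model of the second exterior power `Λ²(ℝ⁴)`). -/
def wedge (v w : Fin 4 → ℝ) : Fin 4 → Fin 4 → ℝ :=
  fun i j => v i * w j - v j * w i

/-- Partial derivative of a two-parameter map with respect to the first variable. -/
def pds {E : Type*} [NormedAddCommGroup E] [NormedSpace ℝ E]
    (x : ℝ → ℝ → E) (s t : ℝ) : E :=
  deriv (fun u => x u t) s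

/-- Partial derivative of a two-parameter map with respect to the second variable. -/
def pdt {E : Type*} [NormedAddCommGroup E] [NormedSpace ℝ E]
    (x : ℝ → ℝ → E) (s t : ℝ) : E :=
  deriv (fun u => x s u) t

/-- `m²(s,t) = -B(α'(s), β'(t))`, the conformal factor of the induced metric
`-m²(ds⊗dt + dt⊗ds)` of the minimal Lorentzian surface `x(s,t) = α(s) + β(t)`. -/
def msq (α β : ℝ → Fin 4 → ℝ) (s t : ℝ) : ℝ :=
  -B4 (deriv α s) (deriv β t)

/-- `η₁ = h(∂s,∂s)`: the component of `x_{ss} = α''` orthogonal to the tangent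
plane `span{α'(s), β'(t)}`. -/
def eta1 (α β : ℝ → Fin 4 → ℝ) (s t : ℝ) : Fin 4 → ℝ :=
  deriv (deriv α) s
    - (B4 (deriv (deriv α) s) (deriv β t) / B4 (deriv α s) (deriv β t)) • deriv α s

/-- `η₂ = h(∂t,∂t)`: the component of `x_{tt} = β''` orthogonal to the tangent
plane `span{α'(s), β'(t)}`. -/
def eta2 (α β : ℝ → Fin 4 → ℝ) (s t : ℝ) : Fin 4 → ℝ :=
  deriv (deriv β) t
    - (B4 (deriv (deriv β) t) (deriv α s) / B4 (deriv α s) (deriv β t)) • deriv β t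

/-- The Gauss map `ν = (1/m²)·(α'(s) ∧ β'(t))`, valued in (a model of) `Λ²(ℝ⁴)`. -/
def gaussMap (α β : ℝ → Fin 4 → ℝ) (s t : ℝ) : Fin 4 → Fin 4 → ℝ :=
  (1 / msq α β s t) • wedge (deriv α s) (deriv β t)

/-- The Laplace–Beltrami operator of the induced metric `-m²(ds⊗dt + dt⊗ds)`
(with the sign convention of the paper) acting on `Λ²(ℝ⁴)`-valued maps:
`Δξ = (2/m²)·∂²ξ/∂s∂t`. -/
def lap (α β : ℝ → Fin 4 → ℝ) (ξ : ℝ → ℝ → (Fin 4 → Fin 4 → ℝ)) (s t : ℝ) :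
    Fin 4 → Fin 4 → ℝ :=
  (2 / msq α β s t) • pds (pdt ξ) s t

/-!
`η₁ = 0` says that `α''` is a multiple of `α'`, so `α'` keeps a fixed direction. Hence `α'` and
`s ↦ B(α'(s), w)` solve the same linear equation `y' = c(s) y`, and their quotient is constant.
Since `-ν(s,t)` is the wedge of this quotient (for `w = β'(t)`) with `β'(t)`, the Gauss map depends
on `t` alone, and so does `∂ν/∂t`.
-/

open Filter Topology

theorem differentiableOn_deriv_of_contDiffOn {𝕜 E : Type*} [NontriviallyNormedField 𝕜]
    [NormedAddCommGroup E] [NormedSpace 𝕜 E] {f : 𝕜 → E} {U : Set 𝕜} {n : WithTop ℕ∞}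
    (hf : ContDiffOn 𝕜 n f U) (hU : IsOpen U) (hn : 2 ≤ n) : DifferentiableOn 𝕜 (deriv f) U :=
  (hf.deriv_of_isOpen hU (one_add_one_eq_two.trans_le hn)).differentiableOn one_ne_zero

theorem hasDerivAt_inv_smul_of_hasDerivAt_smul_self {𝕜 E : Type*} [NontriviallyNormedField 𝕜]
    [NormedAddCommGroup E] [NormedSpace 𝕜 E] {φ : 𝕜 → 𝕜} {γ : 𝕜 → E} {c s : 𝕜}
    (hφ : HasDerivAt φ (c * φ s) s) (hγ : HasDerivAt γ (c • γ s) s) (hne : φ s ≠ 0) :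
    HasDerivAt (fun u => (φ u)⁻¹ • γ u) 0 s := by
  refine ((hφ.fun_inv hne).fun_smul hγ).congr_deriv ?_
  rw [smul_smul, ← add_smul]
  have hcoeff : (φ s)⁻¹ * c + -(c * φ s) / φ s ^ 2 = 0 := by field_simp; ring
  rw [hcoeff, zero_smul]

theorem hasDerivAt_pdt_zero_of_eventually_eq {E : Type*} [NormedAddCommGroup E] [NormedSpace ℝ E]
    {ξ : ℝ → ℝ → E} {s t : ℝ} (h : ∀ᶠ u in 𝓝 s, ξ u =ᶠ[𝓝 t] ξ s) :
    HasDerivAt (fun u => pdt ξ u t) 0 s :=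
  (hasDerivAt_const s (pdt ξ s t)).congr_of_eventuallyEq (h.mono fun _ hu => hu.deriv_eq)

theorem hasDerivAt_B4_left {γ : ℝ → Fin 4 → ℝ} {γ' : Fin 4 → ℝ} {s : ℝ} (hγ : HasDerivAt γ γ' s)
    (w : Fin 4 → ℝ) : HasDerivAt (fun u => B4 (γ u) w) (B4 γ' w) s := by
  have hcoord (i : Fin 4) : HasDerivAt (fun u => γ u i * w i) (γ' i * w i) s :=
    (hasDerivAt_pi.1 hγ i).mul_const (w i)
  exact (((hcoord 0).fun_neg.fun_add (hcoord 1)).fun_add (hcoord 2)).fun_add (hcoord 3)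

theorem B4_comm (v w : Fin 4 → ℝ) : B4 v w = B4 w v := by
  simp only [B4, mul_comm]

theorem wedge_smul_left (c : ℝ) (v w : Fin 4 → ℝ) : wedge (c • v) w = c • wedge v w := by
  ext i j
  simp only [wedge, Pi.smul_apply, smul_eq_mul]
  ring

theorem differentiableAt_wedge_right {E : Type*} [NormedAddCommGroup E] [NormedSpace ℝ E]
    {f : E → Fin 4 → ℝ} {x : E} (hf : DifferentiableAt ℝ f x) (v : Fin 4 → ℝ) :
    DifferentiableAt ℝ (fun y => wedge v (f y)) x := by
  unfold wedge
  fun_prop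

section Surface

variable {α β : ℝ → Fin 4 → ℝ} {s t : ℝ}

theorem gaussMap_eq_neg_wedge_inv_smul (α β : ℝ → Fin 4 → ℝ) (s t : ℝ) :
    gaussMap α β s t =
      -wedge ((B4 (deriv α s) (deriv β t))⁻¹ • deriv α s) (deriv β t) := by
  rw [gaussMap, msq, one_div, inv_neg, neg_smul, wedge_smul_left]

theorem differentiableAt_gaussMap_right (hβ : DifferentiableAt ℝ (deriv β) t)
    (hne : B4 (deriv α s) (deriv β t) ≠ 0) : DifferentiableAt ℝ (gaussMap α β s) t := by
  have hB : DifferentiableAt ℝ (fun v => B4 (deriv α s) (deriv β v)) t := by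
    simpa only [B4_comm (deriv α s)] using
      (hasDerivAt_B4_left hβ.hasDerivAt (deriv α s)).differentiableAt
  have hm : DifferentiableAt ℝ (fun v => 1 / msq α β s v) t :=
    (differentiableAt_const 1).fun_div hB.fun_neg (neg_ne_zero.2 hne)
  exact hm.fun_smul (differentiableAt_wedge_right hβ (deriv α s))

theorem hasDerivAt_inv_B4_smul_deriv_zero (hα : DifferentiableAt ℝ (deriv α) s)
    (hne : B4 (deriv α s) (deriv β t) ≠ 0) (hdeg : eta1 α β s t = 0) :
    HasDerivAt (fun u => (B4 (deriv α u) (deriv β t))⁻¹ • deriv α u) 0 s := by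
  have hB := hasDerivAt_B4_left hα.hasDerivAt (deriv β t)
  refine hasDerivAt_inv_smul_of_hasDerivAt_smul_self
    (c := B4 (deriv (deriv α) s) (deriv β t) / B4 (deriv α s) (deriv β t)) ?_ ?_ hne
  · rwa [div_mul_cancel₀ _ hne]
  · exact hα.hasDerivAt.congr_deriv (sub_eq_zero.1 hdeg)

theorem gaussMap_eq_of_eta1_eq_zero {I : Set ℝ} (hI : IsOpen I) (hI' : IsPreconnected I)
    (hα : DifferentiableOn ℝ (deriv α) I) (hne : ∀ s ∈ I, B4 (deriv α s) (deriv β t) ≠ 0)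
    (hdeg : ∀ s ∈ I, eta1 α β s t = 0) {u : ℝ} (hu : u ∈ I) (hs : s ∈ I) :
    gaussMap α β u t = gaussMap α β s t := by
  have hderiv (r : ℝ) (hr : r ∈ I) :
      HasDerivAt (fun u => (B4 (deriv α u) (deriv β t))⁻¹ • deriv α u) 0 r :=
    hasDerivAt_inv_B4_smul_deriv_zero (hα.differentiableAt (hI.mem_nhds hr)) (hne r hr) (hdeg r hr)
  have hconst := hI.is_const_of_deriv_eq_zero hI'
    (fun r hr => (hderiv r hr).differentiableAt.differentiableWithinAt)
    (fun r hr => (hderiv r hr).deriv) hu hs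
  rw [gaussMap_eq_neg_wedge_inv_smul, gaussMap_eq_neg_wedge_inv_smul, hconst]

/-- The differentiability in `t` is asserted as well because `pdt` has the junk value `0` where the
derivative does not exist. -/
theorem degenerate_relative_null_bundle_implies_harmonic_gaussMap_general
    {I₁ I₂ : Set ℝ} (hI₁ : IsOpen I₁) (hI₂ : IsOpen I₂)
    (hα : DifferentiableOn ℝ (deriv α) I₁) (hβ : DifferentiableOn ℝ (deriv β) I₂)
    (hne : ∀ s ∈ I₁, ∀ t ∈ I₂, B4 (deriv α s) (deriv β t) ≠ 0)
    (hdeg : ∀ s ∈ I₁, ∀ t ∈ I₂, eta1 α β s t = 0) (hs : s ∈ I₁) (ht : t ∈ I₂) :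
    DifferentiableAt ℝ (gaussMap α β s) t ∧
      HasDerivAt (fun u => pdt (gaussMap α β) u t) 0 s := by
  refine ⟨differentiableAt_gaussMap_right (hβ.differentiableAt (hI₂.mem_nhds ht)) (hne s hs t ht),
    hasDerivAt_pdt_zero_of_eventually_eq ?_⟩
  obtain ⟨ε, hε, hball⟩ := Metric.isOpen_iff.1 hI₁ s hs
  filter_upwards [Metric.ball_mem_nhds s hε] with u hu
  filter_upwards [hI₂.mem_nhds ht] with v hv
  exact gaussMap_eq_of_eta1_eq_zero Metric.isOpen_ball (convex_ball s ε).isPreconnected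
    (hα.mono hball) (fun r hr => hne r (hball hr) v hv) (fun r hr => hdeg r (hball hr) v hv)
    hu (Metric.mem_ball_self hε)

end Surface

/-- Theorem 3.6 (iv)⟹(iii): if the relative null bundle is degenerate, i.e.
`η₁ = h(∂s,∂s)` vanishes identically, then the Gauss map is harmonic:
`∂²ν/∂s∂t ≡ 0`, hence `Δν = 0`. -/
theorem degenerate_relative_null_bundle_implies_harmonic_gaussMap
    (I₁ I₂ : Set ℝ) (hI₁ : IsOpen I₁) (hI₂ : IsOpen I₂)
    (hI₁' : I₁.OrdConnected) (hI₂' : I₂.OrdConnected)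
    (α β : ℝ → Fin 4 → ℝ)
    (hα : ContDiffOn ℝ (⊤ : ℕ∞) α I₁) (hβ : ContDiffOn ℝ (⊤ : ℕ∞) β I₂)
    (hαnull : ∀ s ∈ I₁, B4 (deriv α s) (deriv α s) = 0)
    (hβnull : ∀ t ∈ I₂, B4 (deriv β t) (deriv β t) = 0)
    (hneg : ∀ s ∈ I₁, ∀ t ∈ I₂, B4 (deriv α s) (deriv β t) < 0)
    (hdeg : ∀ s ∈ I₁, ∀ t ∈ I₂, eta1 α β s t = 0) :
    ∀ s ∈ I₁, ∀ t ∈ I₂, pds (pdt (gaussMap α β)) s t = 0 := by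
  have hn : (2 : WithTop ℕ∞) ≤ (⊤ : ℕ∞) := WithTop.coe_le_coe.2 (le_top : (2 : ℕ∞) ≤ ⊤)
  exact fun s hs t ht => (degenerate_relative_null_bundle_implies_harmonic_gaussMap_general hI₁ hI₂
    (differentiableOn_deriv_of_contDiffOn hα hI₁ hn)
    (differentiableOn_deriv_of_contDiffOn hβ hI₂ hn)
    (fun s hs t ht => (hneg s hs t ht).ne) hdeg hs ht).2.deriv
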